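/- arXiv:1609.08303 — 8 statements merged into one kernel-verified Lean document; each statement's English description precedes it below -/
import Mathlib

section
/- Let p, q > 1 be coprime integers and let q/p = [a_0, a_1, …, a_n] be its regular continued fraction expansion with a_n ≥ 2. Then K(p,q) = ⌊(a_n − 1)/2⌋. -/
/-- The numerical semigroup generated by `p` and `q`:
all integers of the form `t*p + u*q` with `t, u ≥ 0`. -/
def Spq (p q : ℤ) : Set ℤ := {n : ℤ | ∃ t u : ℤ, 0 ≤ t ∧ 0 ≤ u ∧ n = t * p + u * q}

/-- The set of integers `s ≥ 0` such that `δ, δ+1, …, δ+s` either all belong to `S(p,q)`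
or none of them does, where `δ = (p-1)*(q-1)/2`.  `K(p,q)` is the greatest element
of this set. -/
def KSet (p q : ℤ) : Set ℤ :=
  {s : ℤ | 0 ≤ s ∧ ∀ ρ : ℤ, 0 ≤ ρ → ρ ≤ s →
    ((p - 1) * (q - 1) / 2 + ρ ∈ Spq p q ↔ (p - 1) * (q - 1) / 2 ∈ Spq p q)}

/-- The value of the regular continued fraction `[a 0; a 1, …, a n]`. -/
def cfVal (a : ℕ → ℤ) : ℕ → ℚ
  | 0 => (a 0 : ℚ)
  | n + 1 => (a 0 : ℚ) + 1 / cfVal (fun i => a (i + 1)) n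

/-!
Let `Q / P` be the convergent preceding `q / p` and `a = a_n`. Then `q P - p Q = ±1`, and both
`p / P` and `q / Q` lie in `[a, a + 1]`. Both facts survive exchanging `p` and `q` and adding a
multiple of one to the other, so they follow by running the Euclidean algorithm backwards. As `K` is
symmetric too, we may assume `q P - p Q = 1`, hence `a ≤ p / P < q / Q ≤ a + 1`.

Since `2 (δ + ρ) = p q - p - q + (2 ρ + 1) (q P - p Q)`, every `k` gives
`2 (δ + ρ) = ((1 - k) q - 1 - (2 ρ + 1) Q) p + (k p - 1 + (2 ρ + 1) P) q`,
and the parity of `k` for which both coefficients are even does not depend on `ρ`. As long as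
`2 ρ ≤ a + 1`, if that parity is even then `δ + ρ` is in the semigroup exactly when
`2 ρ + 1 < q / Q`, and if it is odd then `δ + ρ` is not in it exactly when `2 ρ + 1 ≤ p / P`. Both
conditions say `2 ρ + 1 ≤ a`, so membership first changes right after `ρ = ⌊(a - 1) / 2⌋`.
-/

theorem Spq_comm (p q : ℤ) : Spq p q = Spq q p := by
  ext x
  constructor <;> exact fun ⟨t, u, ht, hu, hx⟩ => ⟨u, t, hu, ht, by rw [hx, add_comm]⟩

theorem KSet_comm (p q : ℤ) : KSet p q = KSet q p := by
  unfold KSet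
  rw [Spq_comm p q, mul_comm (p - 1) (q - 1)]

theorem mul_add_mul_notMem_Spq {p q t u : ℤ} (hp : 0 < p) (hq : 0 ≤ q) (hpq : IsCoprime p q)
    (ht : t < 0) (hu : u < p) : t * p + u * q ∉ Spq p q := by
  rintro ⟨T, U, hT, hU, h⟩
  have hshift : (u - U) * q = (T - t) * p := by linear_combination h
  have hdvd : p ∣ u - U := hpq.dvd_of_dvd_mul_right ⟨T - t, by rw [hshift, mul_comm]⟩
  have hpos : 0 < u - U :=
    pos_of_mul_pos_left (hshift ▸ mul_pos (by linarith) hp) hq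
  linarith [Int.le_of_dvd hpos hdvd]

/-- The half-conductor `δ = (p - 1)(q - 1) / 2` of the semigroup `Spq p q`, from which runs
are counted in `KSet p q`. The division is exact when `p` and `q` are coprime. -/
def delta (p q : ℤ) : ℤ := (p - 1) * (q - 1) / 2

theorem two_mul_delta {p q : ℤ} (hpq : IsCoprime p q) : 2 * delta p q = (p - 1) * (q - 1) := by
  obtain ⟨x, y, hxy⟩ := hpq
  have hodd : ¬ Even (x * p + y * q) := by rw [hxy]; exact Int.not_even_one
  refine Int.mul_ediv_cancel' (even_iff_two_dvd.1 ?_)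
  simp only [parity_simps, Int.not_even_one] at hodd ⊢
  tauto

theorem isGreatest_KSet_of_forall_iff {p q K : ℤ} (hK : 0 ≤ K)
    (h : ∀ ρ, 0 ≤ ρ → ρ ≤ K + 1 → ((delta p q + ρ ∈ Spq p q ↔ delta p q ∈ Spq p q) ↔ ρ ≤ K)) :
    IsGreatest (KSet p q) K := by
  refine ⟨⟨hK, fun ρ hρ hρK => (h ρ hρ (by lia)).2 hρK⟩, fun s ⟨_, hs⟩ => ?_⟩
  by_contra! hlt
  have := (h (K + 1) (by lia) le_rfl).1 (hs (K + 1) (by lia) (by lia))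
  lia

section Determinant

variable {p q P Q : ℤ}

theorem isCoprime_of_det_eq_one (hdet : q * P - p * Q = 1) : IsCoprime p q :=
  ⟨-Q, P, by linear_combination hdet⟩

theorem delta_add_eq (hdet : q * P - p * Q = 1) {ρ k t u : ℤ}
    (ht : 2 * t = (1 - k) * q - 1 - (2 * ρ + 1) * Q)
    (hu : 2 * u = k * p - 1 + (2 * ρ + 1) * P) :
    delta p q + ρ = t * p + u * q := by
  refine mul_left_cancel₀ (two_ne_zero' ℤ) ?_
  linear_combination two_mul_delta (isCoprime_of_det_eq_one hdet) - (2 * ρ + 1) * hdet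
    - p * ht - q * hu

/-- The two alternatives are those in which the right-hand sides of the hypotheses of `delta_add_eq`
are both even: the first one for even `k`, the second one for odd `k`. -/
theorem odd_and_odd_of_det_eq_one (hdet : q * P - p * Q = 1) :
    Odd P ∧ Odd (q + Q) ∨ Odd Q ∧ Odd (p + P) := by
  have hodd : ¬ Even (q * P - p * Q) := by rw [hdet]; exact Int.not_even_one
  simp only [← Int.not_even_iff_odd, parity_simps] at hodd ⊢
  tauto

theorem delta_add_mem_Spq_iff_mul_lt (hdet : q * P - p * Q = 1) (hq : 0 ≤ q)
    (hP : 0 < P) (hPodd : Odd P) (hqQ : Odd (q + Q)) {ρ : ℤ} (hρ : 0 ≤ ρ)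
    (hρP : (2 * ρ + 1) * P ≤ 2 * p) :
    delta p q + ρ ∈ Spq p q ↔ (2 * ρ + 1) * Q < q := by
  have hpos : 0 < (2 * ρ + 1) * P := by positivity
  obtain ⟨x, hx⟩ := hPodd
  obtain ⟨y, hy⟩ := hqQ
  obtain ⟨t, ht⟩ : ∃ t, 2 * t = (1 - 0) * q - 1 - (2 * ρ + 1) * Q :=
    ⟨y - (ρ + 1) * Q, by linear_combination -hy⟩
  obtain ⟨u, hu⟩ : ∃ u, 2 * u = 0 * p - 1 + (2 * ρ + 1) * P :=
    ⟨x + ρ * P, by linear_combination -hx⟩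
  rw [delta_add_eq hdet ht hu]
  constructor
  · contrapose!
    exact fun hle => mul_add_mul_notMem_Spq (by linarith) hq (isCoprime_of_det_eq_one hdet)
      (by linarith) (by linarith)
  · exact fun hlt => ⟨t, u, by lia, by lia, rfl⟩

theorem delta_add_mem_Spq_iff_lt_mul (hdet : q * P - p * Q = 1) (hp : 0 < p)
    (hQ : 0 < Q) (hQodd : Odd Q) (hpP : Odd (p + P)) {ρ : ℤ} (hρ : 0 ≤ ρ)
    (hρQ : (2 * ρ + 1) * Q < 2 * q) :
    delta p q + ρ ∈ Spq p q ↔ p < (2 * ρ + 1) * P := by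
  have hpos : 0 < (2 * ρ + 1) * Q := by positivity
  obtain ⟨x, hx⟩ := hpP
  obtain ⟨y, hy⟩ := hQodd
  constructor
  · contrapose!
    intro hle
    obtain ⟨t, ht⟩ : ∃ t, 2 * t = (1 - 1) * q - 1 - (2 * ρ + 1) * Q :=
      ⟨-y - 1 - ρ * Q, by linear_combination hy⟩
    obtain ⟨u, hu⟩ : ∃ u, 2 * u = 1 * p - 1 + (2 * ρ + 1) * P :=
      ⟨x + ρ * P, by linear_combination -hx⟩
    rw [delta_add_eq hdet ht hu]
    exact mul_add_mul_notMem_Spq hp (by linarith) (isCoprime_of_det_eq_one hdet)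
      (by linarith) (by linarith)
  · intro hlt
    obtain ⟨t, ht⟩ : ∃ t, 2 * t = (1 - -1) * q - 1 - (2 * ρ + 1) * Q :=
      ⟨q - y - 1 - ρ * Q, by linear_combination hy⟩
    obtain ⟨u, hu⟩ : ∃ u, 2 * u = -1 * p - 1 + (2 * ρ + 1) * P :=
      ⟨x - p + ρ * P, by linear_combination -hx⟩
    rw [delta_add_eq hdet ht hu]
    exact ⟨t, u, by lia, by lia, rfl⟩

end Determinant

/-- `Q / P` is the convergent preceding `q / p`, where `a` is the last partial quotient of `q / p`.
Writing `Q' / P'` for the convergent before that one, `p = a * P + P'` and `q = a * Q + Q'`; the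
bounds `0 ≤ P' ≤ P` and `0 ≤ Q' ≤ Q` are recorded as bounds on `p` and `q`. -/
structure IsPrecedingConvergent (p q a P Q : ℤ) : Prop where
  den_pos : 0 < P
  num_pos : 0 < Q
  abs_det : |q * P - p * Q| = 1
  mul_le_den : a * P ≤ p
  den_le_mul : p ≤ (a + 1) * P
  mul_le_num : a * Q ≤ q
  num_le_mul : q ≤ (a + 1) * Q

namespace IsPrecedingConvergent

variable {p q a P Q : ℤ}

theorem symm (h : IsPrecedingConvergent p q a P Q) : IsPrecedingConvergent q p a Q P :=
  ⟨h.num_pos, h.den_pos, abs_sub_comm (q * P) (p * Q) ▸ h.abs_det, h.mul_le_num, h.num_le_mul,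
    h.mul_le_den, h.den_le_mul⟩

theorem of_pos {c : ℤ} (hc : 0 < c) : IsPrecedingConvergent a (c * a + 1) a 1 c where
  den_pos := one_pos
  num_pos := hc
  abs_det := by rw [show (c * a + 1) * 1 - a * c = 1 by ring, abs_one]
  mul_le_den := by linarith
  den_le_mul := by linarith
  mul_le_num := by linarith
  num_le_mul := by linarith [Int.add_one_le_iff.2 hc]

theorem mul_add {c : ℤ} (hc : 0 ≤ c) (h : IsPrecedingConvergent p q a P Q) :
    IsPrecedingConvergent p (c * p + q) a P (c * P + Q) where
  den_pos := h.den_pos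
  num_pos := by linarith [h.num_pos, mul_nonneg hc h.den_pos.le]
  abs_det := by
    rw [show (c * p + q) * P - p * (c * P + Q) = q * P - p * Q by ring, h.abs_det]
  mul_le_den := h.mul_le_den
  den_le_mul := h.den_le_mul
  mul_le_num := by
    linarith [mul_le_mul_of_nonneg_left h.mul_le_den hc, h.mul_le_num]
  num_le_mul := by
    linarith [mul_le_mul_of_nonneg_left h.den_le_mul hc, h.num_le_mul]

theorem den_lt_mul (h : IsPrecedingConvergent p q a P Q) (hdet : q * P - p * Q = 1) :
    p < (a + 1) * P := by
  have hlt : p * Q < (a + 1) * P * Q := by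
    calc p * Q < q * P := by linarith
      _ ≤ (a + 1) * Q * P := mul_le_mul_of_nonneg_right h.num_le_mul h.den_pos.le
      _ = (a + 1) * P * Q := by ring
  exact lt_of_mul_lt_mul_right hlt h.num_pos.le

theorem mul_lt_num (h : IsPrecedingConvergent p q a P Q) (hdet : q * P - p * Q = 1) :
    a * Q < q := by
  have hlt : a * Q * P < q * P := by
    calc a * Q * P = a * P * Q := by ring
      _ ≤ p * Q := mul_le_mul_of_nonneg_right h.mul_le_den h.num_pos.le
      _ < q * P := by linarith
  exact lt_of_mul_lt_mul_right hlt h.den_pos.le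

theorem mul_num_lt_iff (h : IsPrecedingConvergent p q a P Q) (hdet : q * P - p * Q = 1) {m : ℤ} :
    m * Q < q ↔ m ≤ a := by
  refine ⟨fun hm => ?_, fun hm => ?_⟩
  · exact Int.lt_add_one_iff.1 (lt_of_mul_lt_mul_right (hm.trans_le h.num_le_mul) h.num_pos.le)
  · exact (mul_le_mul_of_nonneg_right hm h.num_pos.le).trans_lt (h.mul_lt_num hdet)

theorem den_lt_mul_iff (h : IsPrecedingConvergent p q a P Q) (hdet : q * P - p * Q = 1) {m : ℤ} :
    p < m * P ↔ a < m := by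
  refine ⟨fun hm => ?_, fun hm => ?_⟩
  · exact lt_of_mul_lt_mul_right (h.mul_le_den.trans_lt hm) h.den_pos.le
  · exact (h.den_lt_mul hdet).trans_le (mul_le_mul_of_nonneg_right hm h.den_pos.le)

theorem delta_add_mem_Spq_iff (h : IsPrecedingConvergent p q a P Q) (hdet : q * P - p * Q = 1)
    (ha : 2 ≤ a) :
    (∀ ρ, 0 ≤ ρ → 2 * ρ ≤ a + 1 → (delta p q + ρ ∈ Spq p q ↔ 2 * ρ + 1 ≤ a)) ∨
      ∀ ρ, 0 ≤ ρ → 2 * ρ ≤ a + 1 → (delta p q + ρ ∈ Spq p q ↔ a < 2 * ρ + 1) := by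
  have hP := h.den_pos
  have hQ := h.num_pos
  have hp : 0 < p := (by positivity : 0 < a * P).trans_le h.mul_le_den
  have hq : 0 < q := (by positivity : 0 < a * Q).trans_le h.mul_le_num
  rcases odd_and_odd_of_det_eq_one hdet with ⟨hPodd, hqQ⟩ | ⟨hQodd, hpP⟩
  · refine .inl fun ρ hρ hρa => ?_
    have hρP : (2 * ρ + 1) * P ≤ 2 * p := by
      calc (2 * ρ + 1) * P ≤ 2 * a * P := mul_le_mul_of_nonneg_right (by linarith) hP.le
        _ ≤ 2 * p := by linarith [h.mul_le_den]
    rw [delta_add_mem_Spq_iff_mul_lt hdet hq.le hP hPodd hqQ hρ hρP, h.mul_num_lt_iff hdet]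
  · refine .inr fun ρ hρ hρa => ?_
    have hρQ : (2 * ρ + 1) * Q < 2 * q := by
      calc (2 * ρ + 1) * Q ≤ 2 * a * Q := mul_le_mul_of_nonneg_right (by linarith) hQ.le
        _ < 2 * q := by linarith [h.mul_lt_num hdet]
    rw [delta_add_mem_Spq_iff_lt_mul hdet hp hQ hQodd hpP hρ hρQ, h.den_lt_mul_iff hdet]

theorem isGreatest_KSet_of_det_eq_one (h : IsPrecedingConvergent p q a P Q)
    (hdet : q * P - p * Q = 1) (ha : 2 ≤ a) : IsGreatest (KSet p q) ((a - 1) / 2) := by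
  refine isGreatest_KSet_of_forall_iff (by lia) fun ρ hρ hρK => ?_
  rcases h.delta_add_mem_Spq_iff hdet ha with hmem | hmem <;>
  · have hmem_zero := hmem 0 le_rfl (by lia)
    rw [add_zero] at hmem_zero
    rw [hmem ρ hρ (by lia), hmem_zero]
    lia

theorem isGreatest_KSet (h : IsPrecedingConvergent p q a P Q) (ha : 2 ≤ a) :
    IsGreatest (KSet p q) ((a - 1) / 2) := by
  rcases eq_or_eq_neg_of_abs_eq h.abs_det with hdet | hdet
  · exact h.isGreatest_KSet_of_det_eq_one hdet ha
  · rw [KSet_comm]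
    exact h.symm.isGreatest_KSet_of_det_eq_one (by linarith) ha

end IsPrecedingConvergent

theorem one_lt_cfVal {n : ℕ} {a : ℕ → ℤ} (hpos : ∀ i ≤ n, 0 < a i) (hlast : 2 ≤ a n) :
    1 < cfVal a n := by
  induction n generalizing a with
  | zero =>
    rw [cfVal]
    exact_mod_cast one_lt_two.trans_le hlast
  | succ n ih =>
    have htail := ih (a := fun i => a (i + 1)) (fun i hi => hpos (i + 1) (by lia)) hlast
    have hhead : (1 : ℚ) ≤ a 0 := by exact_mod_cast hpos 0 (Nat.zero_le _)
    rw [cfVal]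
    linarith [one_div_pos.2 (one_pos.trans htail)]

theorem exists_remainder_of_div_eq_cfVal_succ {p q : ℤ} (hp : 0 < p) {n : ℕ} {a : ℕ → ℤ}
    (hcf : (q : ℚ) / p = cfVal a (n + 1)) (htail : 1 < cfVal (fun i => a (i + 1)) n) :
    ∃ r, q = a 0 * p + r ∧ 0 < r ∧ r < p ∧ (p : ℚ) / r = cfVal (fun i => a (i + 1)) n := by
  set x := cfVal (fun i => a (i + 1)) n with hx
  have hpQ : (0 : ℚ) < p := by exact_mod_cast hp
  have hr : ((q - a 0 * p : ℤ) : ℚ) = p / x := by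
    rw [cfVal, ← hx, div_eq_iff hpQ.ne'] at hcf
    push_cast
    linear_combination hcf
  refine ⟨q - a 0 * p, by ring, ?_, ?_, ?_⟩
  · exact_mod_cast hr ▸ div_pos hpQ (one_pos.trans htail)
  · exact_mod_cast hr ▸ div_lt_self hpQ htail
  · rw [hr, div_div_cancel₀ hpQ.ne']

theorem exists_isPrecedingConvergent {p q : ℤ} {n : ℕ} {a : ℕ → ℤ} (hp : 0 < p) (hq : 1 < q)
    (hpq : IsCoprime p q) (hcf : (q : ℚ) / p = cfVal a n)
    (hpos : ∀ i : ℕ, 1 ≤ i → i ≤ n → 0 < a i) (hlast : 2 ≤ a n) :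
    p = 1 ∧ q = a n ∨ ∃ P Q, IsPrecedingConvergent p q (a n) P Q := by
  induction n generalizing p q a with
  | zero =>
    have hq_eq : q = a 0 * p := by
      rw [cfVal, div_eq_iff (by exact_mod_cast hp.ne')] at hcf
      exact_mod_cast hcf
    have hp_eq : p = 1 :=
      Int.eq_one_of_dvd_one hp.le (hpq.isUnit_of_dvd ⟨a 0, by linarith⟩).dvd
    exact .inl ⟨hp_eq, by rw [hq_eq, hp_eq, mul_one]⟩
  | succ n ih =>
    have htail_pos : ∀ i ≤ n, 0 < a (i + 1) := fun i hi => hpos (i + 1) (by lia) (by lia)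
    obtain ⟨r, rfl, hr_pos, hr_lt, hr_cf⟩ :=
      exists_remainder_of_div_eq_cfVal_succ hp hcf (one_lt_cfVal htail_pos hlast)
    have hhead : 0 ≤ a 0 := by
      by_contra! hneg
      nlinarith
    have hrp : IsCoprime r p := by
      rw [add_comm] at hpq
      exact (IsCoprime.add_mul_right_right_iff.1 hpq).symm
    refine .inr ?_
    rcases ih hr_pos (by lia) hrp hr_cf (fun i _ hi => htail_pos i hi) hlast with
      ⟨rfl, rfl⟩ | ⟨P, Q, h⟩
    · have hhead_pos : 0 < a 0 := hhead.lt_of_ne (by rintro h0; simp [← h0] at hq)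
      exact ⟨1, a 0, .of_pos hhead_pos⟩
    · exact ⟨Q, a 0 * Q + P, h.symm.mul_add hhead⟩

theorem stmt0 (p q : ℤ) (hp : 1 < p) (hq : 1 < q) (hpq : Int.gcd p q = 1)
    (n : ℕ) (a : ℕ → ℤ)
    (hcf : (q : ℚ) / (p : ℚ) = cfVal a n)
    (hpos : ∀ i : ℕ, 1 ≤ i → i ≤ n → 0 < a i)
    (hlast : 2 ≤ a n) :
    IsGreatest (KSet p q) ((a n - 1) / 2) := by
  rcases exists_isPrecedingConvergent (one_pos.trans hp) hq (Int.isCoprime_iff_gcd_eq_one.2 hpq)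
    hcf hpos hlast with ⟨rfl, _⟩ | ⟨P, Q, h⟩
  · exact absurd hp (lt_irrefl 1)
  · exact h.isGreatest_KSet hlast
end

section
/- Let p, q > 1 be coprime integers and ρ ≥ 0 an integer. Suppose δ + ρ = t·p + u·q for some integers t, u. Then: u ≡ r_ρ (mod p) if either (p is odd and r̄ is odd) or (p is even and k + l is even); and u ≡ r′_ρ (mod p) if either (p is odd and r̄ is even) or (p is even and k + l is odd). -/
section Parity

variable {p q rb k l m : ℤ}

theorem odd_of_isCoprime_of_even (h : IsCoprime p q) (hp : Even p) : Odd q :=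
  Int.isCoprime_two_left.mp (h.of_isCoprime_of_dvd_left hp.two_dvd)

theorem even_sub_one_mul_sub_one_of_isCoprime (h : IsCoprime p q) :
    Even ((p - 1) * (q - 1)) := by
  rcases Int.even_or_odd p with hp | hp
  · exact ((odd_of_isCoprime_of_even h hp).sub_odd odd_one).mul_left _
  · exact (hp.sub_odd odd_one).mul_right _

/-- The integer `c = 1 - r̄ + (p - 1) m`, where `q r̄ = 1 + p m`, for which
`2 u ≡ r̄ - 1 + p c + 2 ρ r̄` modulo `2 p` whenever `δ + ρ = t p + u q`; its parity decides between
`r_ρ` and `r'_ρ`. The variable `rb` is `r̄`. -/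
def halfShift (p rb m : ℤ) : ℤ := 1 - rb + (p - 1) * m

theorem even_halfShift_iff_of_odd (hp : Odd p) : Even (halfShift p rb m) ↔ Odd rb := by
  have hpm : Even ((p - 1) * m) := (hp.sub_odd odd_one).mul_right m
  rw [halfShift, Int.even_add, iff_true_right hpm, Int.even_sub', iff_true_left odd_one]

theorem even_halfShift_iff_of_even (hp : Even p) (hrb : Odd rb) :
    Even (halfShift p rb (k * rb + l)) ↔ Even (k + l) := by
  have hrb' : Even (1 - rb) := odd_one.sub_odd hrb
  have hp' : ¬Even (p - 1) := Int.not_even_iff_odd.mpr (hp.sub_odd odd_one)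
  rw [halfShift, Int.even_add, iff_true_left hrb', Int.even_mul, or_iff_right hp', Int.even_add,
    Int.even_mul, or_iff_left (Int.not_even_iff_odd.mpr hrb), Int.even_add]

end Parity

section Coefficient

variable {p q rb m ρ t u : ℤ}

theorem two_mul_coeff_modEq (hm : q * rb = 1 + p * m)
    (h : (p - 1) * (q - 1) + 2 * ρ = 2 * (t * p + u * q)) :
    2 * u ≡ rb - 1 + p * halfShift p rb m + 2 * (ρ * rb) [ZMOD 2 * p] := by
  refine Int.modEq_iff_dvd.mpr ⟨t * rb + u * m, ?_⟩
  rw [halfShift]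
  linear_combination rb * h + (2 * u - p + 1) * hm

theorem coeff_modEq_of_halfShift_modEq {e : ℤ} (hm : q * rb = 1 + p * m)
    (h : (p - 1) * (q - 1) + 2 * ρ = 2 * (t * p + u * q)) (he : halfShift p rb m ≡ e [ZMOD 2]) :
    u ≡ (p * e + rb - 1) / 2 + ρ * rb [ZMOD p] := by
  obtain ⟨a, ha⟩ := (two_mul_coeff_modEq hm h).dvd
  obtain ⟨d, hd⟩ := he.dvd
  have hhalf : (p * e + rb - 1) / 2 = u - ρ * rb + p * (a + d) := by
    refine Int.ediv_eq_of_eq_mul_right two_ne_zero ?_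
    linear_combination ha + p * hd
  refine Int.modEq_iff_dvd.mpr ⟨a + d, ?_⟩
  rw [hhalf]
  ring

theorem coeff_modEq_of_even_halfShift (hm : q * rb = 1 + p * m)
    (h : (p - 1) * (q - 1) + 2 * ρ = 2 * (t * p + u * q)) (hc : Even (halfShift p rb m)) :
    u ≡ (rb - 1) / 2 + ρ * rb [ZMOD p] := by
  simpa only [mul_zero, zero_add] using
    coeff_modEq_of_halfShift_modEq (e := 0) hm h (Int.even_iff.mp hc)

theorem coeff_modEq_of_odd_halfShift (hm : q * rb = 1 + p * m)
    (h : (p - 1) * (q - 1) + 2 * ρ = 2 * (t * p + u * q)) (hc : Odd (halfShift p rb m)) :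
    u ≡ (p + rb - 1) / 2 + ρ * rb [ZMOD p] := by
  simpa only [mul_one] using
    coeff_modEq_of_halfShift_modEq (e := 1) hm h (Int.odd_iff.mp hc)

end Coefficient

theorem stmt2_general {p q k r rb l ρ t u : ℤ} (hqkr : q = k * p + r) (hrrb : r * rb = 1 + l * p)
    (heq : (p - 1) * (q - 1) / 2 + ρ = t * p + u * q) :
    (((Odd p ∧ Odd rb) ∨ (Even p ∧ Even (k + l))) →
      u ≡ (rb - 1) / 2 + ρ * rb [ZMOD p]) ∧
    (((Odd p ∧ Even rb) ∨ (Even p ∧ Odd (k + l))) →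
      u ≡ (p + rb - 1) / 2 + ρ * rb [ZMOD p]) := by
  have hm : q * rb = 1 + p * (k * rb + l) := by
    linear_combination rb * hqkr + hrrb
  have hcop : IsCoprime p (q * rb) := ⟨-(k * rb + l), 1, by linear_combination hm⟩
  have hodd : Even p → Odd rb := odd_of_isCoprime_of_even hcop.of_mul_right_right
  have hδ : (p - 1) * (q - 1) + 2 * ρ = 2 * (t * p + u * q) := by
    rw [← heq, mul_add, Int.two_mul_ediv_two_of_even
      (even_sub_one_mul_sub_one_of_isCoprime hcop.of_mul_right_left)]
  refine ⟨fun h => coeff_modEq_of_even_halfShift hm hδ ?_,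
    fun h => coeff_modEq_of_odd_halfShift hm hδ ?_⟩
  · rcases h with ⟨hp, hrb⟩ | ⟨hp, hkl⟩
    · exact (even_halfShift_iff_of_odd hp).mpr hrb
    · exact (even_halfShift_iff_of_even hp (hodd hp)).mpr hkl
  · rw [← Int.not_even_iff_odd]
    rcases h with ⟨hp, hrb⟩ | ⟨hp, hkl⟩
    · rwa [even_halfShift_iff_of_odd hp, Int.not_odd_iff_even]
    · rwa [even_halfShift_iff_of_even hp (hodd hp), Int.not_even_iff_odd]

theorem stmt2 (p q k r rb l ρ t u : ℤ) (hp : 1 < p) (hq : 1 < q)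
    (hpq : Int.gcd p q = 1)
    (hqkr : q = k * p + r) (hr0 : 0 < r) (hrp : r < p)
    (hrb0 : 0 < rb) (hrbp : rb < p) (hrrb : r * rb = 1 + l * p)
    (hρ : 0 ≤ ρ)
    (heq : (p - 1) * (q - 1) / 2 + ρ = t * p + u * q) :
    (((Odd p ∧ Odd rb) ∨ (Even p ∧ Even (k + l))) →
      u ≡ ((rb - 1) / 2 + ρ * rb) % p [ZMOD p]) ∧
    (((Odd p ∧ Even rb) ∨ (Even p ∧ Odd (k + l))) →
      u ≡ ((p + rb - 1) / 2 + ρ * rb) % p [ZMOD p]) := by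
  simpa only [Int.ModEq, Int.emod_emod] using stmt2_general hqkr hrrb heq
end

section
/- Let p, q > 1 be coprime integers and suppose r̄ is odd. Then the set of residues ρ with 0 ≤ ρ < p satisfying r_ρ ≤ ⌈p/2⌉ − 1 has exactly ⌈p/2⌉ elements, and ρ = 0 belongs to this set. -/
theorem isCoprime_of_mul_modEq_one {n a b : ℤ} (h : a * b ≡ 1 [ZMOD n]) : IsCoprime b n := by
  obtain ⟨c, hc⟩ := h.dvd
  exact ⟨a, c, by linarith⟩

theorem modEq_of_add_mul_modEq_add_mul {n b : ℤ} (hb : IsCoprime b n) {a x y : ℤ}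
    (h : a + x * b ≡ a + y * b [ZMOD n]) : x ≡ y [ZMOD n] := by
  have hdvd : n ∣ (y - x) * b := by
    rw [sub_mul]
    exact (h.add_left_cancel' a).dvd
  exact Int.modEq_of_dvd (hb.symm.dvd_of_dvd_mul_right hdvd)

theorem bijOn_add_mul_emod {n b : ℤ} (hb : IsCoprime b n) (a : ℤ) :
    Set.BijOn (fun x ↦ (a + x * b) % n) (Set.Ico 0 n) (Set.Ico 0 n) := by
  have hmaps : Set.MapsTo (fun x ↦ (a + x * b) % n) (Set.Ico 0 n) (Set.Ico 0 n) := by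
    intro x hx
    have hn : 0 < n := hx.1.trans_lt hx.2
    exact ⟨Int.emod_nonneg _ hn.ne', Int.emod_lt_of_pos _ hn⟩
  have hinj : Set.InjOn (fun x ↦ (a + x * b) % n) (Set.Ico 0 n) := fun x hx y hy hxy ↦ calc
    x = x % n := (Int.emod_eq_of_lt hx.1 hx.2).symm
    _ = y % n := modEq_of_add_mul_modEq_add_mul hb hxy
    _ = y := Int.emod_eq_of_lt hy.1 hy.2
  have hsurj : Set.SurjOn (fun x ↦ (a + x * b) % n) (Set.Ico 0 n) (Set.Ico 0 n) := by
    simpa only [Finset.coe_Ico] using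
      Finset.surjOn_of_injOn_of_card_le (s := Finset.Ico 0 n) (t := Finset.Ico 0 n)
        (fun x ↦ (a + x * b) % n) (by simpa only [Finset.coe_Ico] using hmaps)
        (by simpa only [Finset.coe_Ico] using hinj) le_rfl
  exact ⟨hmaps, hinj, hsurj⟩

theorem ncard_Ico_int (a b : ℤ) : (Set.Ico a b).ncard = (b - a).toNat := by
  rw [← Finset.coe_Ico, Set.ncard_coe_finset, Int.card_Ico]

theorem ncard_add_mul_emod_lt {n b m : ℤ} (hb : IsCoprime b n) (a : ℤ) (hmn : m ≤ n) :
    {x : ℤ | 0 ≤ x ∧ x < n ∧ (a + x * b) % n < m}.ncard = m.toNat := by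
  have hset : {x : ℤ | 0 ≤ x ∧ x < n ∧ (a + x * b) % n < m} =
      Set.Ico 0 n ∩ (fun x ↦ (a + x * b) % n) ⁻¹' Set.Ico 0 m := by
    ext x
    constructor
    · rintro ⟨hx0, hxn, hxm⟩
      exact ⟨⟨hx0, hxn⟩, Int.emod_nonneg _ (hx0.trans_lt hxn).ne', hxm⟩
    · rintro ⟨⟨hx0, hxn⟩, -, hxm⟩
      exact ⟨hx0, hxn, hxm⟩
  have hbij := (bijOn_add_mul_emod hb a).subset_right (Set.Ico_subset_Ico_right hmn)
  rw [hset, hbij.ncard_eq, ncard_Ico_int, sub_zero]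

theorem stmt3_general {n b a m : ℤ} (hb : IsCoprime b n) (ha0 : 0 ≤ a) (ham : a < m)
    (hmn : m ≤ n) :
    {x : ℤ | 0 ≤ x ∧ x < n ∧ (a + x * b) % n ≤ m - 1}.ncard = m.toNat ∧
      (0 : ℤ) ∈ {x : ℤ | 0 ≤ x ∧ x < n ∧ (a + x * b) % n ≤ m - 1} := by
  simp only [Int.le_sub_one_iff]
  refine ⟨ncard_add_mul_emod_lt hb a hmn, le_rfl, by omega, ?_⟩
  rwa [zero_mul, add_zero, Int.emod_eq_of_lt ha0 (ham.trans_le hmn)]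

theorem stmt3 (p q k r rb : ℤ) (hp : 1 < p) (hq : 1 < q)
    (hpq : Int.gcd p q = 1)
    (hqkr : q = k * p + r) (hr0 : 0 < r) (hrp : r < p)
    (hrb0 : 0 < rb) (hrbp : rb < p) (hrrb : r * rb ≡ 1 [ZMOD p])
    (hodd : Odd rb) :
    Set.ncard {ρ : ℤ | 0 ≤ ρ ∧ ρ < p ∧
        ((rb - 1) / 2 + ρ * rb) % p ≤ (p + 1) / 2 - 1} = ((p + 1) / 2).toNat ∧
    (0 : ℤ) ∈ {ρ : ℤ | 0 ≤ ρ ∧ ρ < p ∧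
        ((rb - 1) / 2 + ρ * rb) % p ≤ (p + 1) / 2 - 1} := by
  exact stmt3_general (isCoprime_of_mul_modEq_one hrrb) (by omega) (by omega) (by omega)
end

section
/- Let p, q > 1 be coprime integers and suppose r̄ is odd. Then K(p,q) equals the greatest nonnegative integer σ such that for all integers ρ with 0 ≤ ρ ≤ σ one has r_ρ ≤ ⌈p/2⌉ − 1. -/
/-!
Let `b` invert `q` modulo `p`. An integer `n` lies in `S(p,q)` iff `n ≥ u q`, where `u` is the
residue of `n b` modulo `p`. Since `δ` is close to `p q / 2`, for `n = δ + ρ` with `0 ≤ ρ ≤ ⌈p/2⌉`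
this says that `u < p/2`. Modulo `p`, this residue `u` is `r_ρ + d` with
`d = δ b - (b - 1) / 2` independent of `ρ` and `p ∣ 2 d`; shifting by such a `d` either preserves or
exchanges the lower and upper halves of the residues. As `r_0 < p/2`, the condition
`δ + ρ ∈ S(p,q) ↔ δ ∈ S(p,q)` is therefore `r_ρ < p/2`.

The range `ρ ≤ ⌈p/2⌉` suffices because `r_ρ + r_{p-1-ρ} = p - 1` makes `r_ρ` large for one of
the two indices `⌈p/2⌉` and `p - 1 - ⌈p/2⌉`.
-/

/-- The number `δ = (p - 1)(q - 1) / 2`, half of the conductor of the semigroup generated by `p` and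
`q`. The integer division is exact for coprime `p` and `q`. -/
def halfConductor (p q : ℤ) : ℤ := (p - 1) * (q - 1) / 2

/-- The residue `r_ρ` modulo `p` of the term of index `ρ` in the arithmetic progression with first
term `(b - 1) / 2` and common difference `b`; in the theorem, `b` is `r̄`. -/
def progressionResidue (p b ρ : ℤ) : ℤ := ((b - 1) / 2 + ρ * b) % p

lemma setOf_forall_le_congr {α : Type*} [LinearOrder α] {P Q : α → Prop} {a N : α}
    (hPQ : ∀ x, a ≤ x → x ≤ N → (P x ↔ Q x)) (hP : ∃ x, a ≤ x ∧ x ≤ N ∧ ¬P x) :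
    {s | a ≤ s ∧ ∀ x, a ≤ x → x ≤ s → P x} = {s | a ≤ s ∧ ∀ x, a ≤ x → x ≤ s → Q x} := by
  obtain ⟨x₀, hax₀, hx₀N, hPx₀⟩ := hP
  have hQx₀ : ¬Q x₀ := fun h => hPx₀ ((hPQ x₀ hax₀ hx₀N).mpr h)
  ext s
  rcases le_or_gt x₀ s with hx₀s | hsx₀
  · exact iff_of_false (fun h => hPx₀ (h.2 x₀ hax₀ hx₀s)) (fun h => hQx₀ (h.2 x₀ hax₀ hx₀s))
  · have hsN : s ≤ N := hsx₀.le.trans hx₀N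
    exact and_congr_right fun _ => forall_congr' fun x =>
      forall₂_congr fun hax hxs => hPQ x hax (hxs.trans hsN)

section Residue

variable {p b d ρ : ℤ}

lemma two_mul_add_emod_lt_iff_iff_dvd (hp : 0 < p) (hd : p ∣ 2 * d) (x : ℤ) :
    (2 * ((x + d) % p) < p ↔ 2 * (x % p) < p) ↔ p ∣ d := by
  obtain ⟨c, hc⟩ := hd
  rcases Int.even_or_odd' c with ⟨e, rfl | rfl⟩
  · obtain rfl : d = p * e := by linarith
    simp
  · obtain ⟨h, rfl⟩ : 2 ∣ p := ⟨d - p * e, by linarith⟩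
    obtain rfl : d = h + 2 * h * e := by linarith
    have hshift : (x + (h + 2 * h * e)) % (2 * h) = (x % (2 * h) + h) % (2 * h) := by
      rw [Int.emod_add_emod, ← add_assoc, Int.add_mul_emod_self_left]
    have hndvd : ¬2 * h ∣ h + 2 * h * e := by
      rw [dvd_add_left (dvd_mul_right _ _)]
      exact fun hdvd => absurd (Int.le_of_dvd (by omega) hdvd) (by omega)
    have hnonneg := Int.emod_nonneg x hp.ne'
    have hlt := Int.emod_lt_of_pos x hp
    have hexchange : 2 * ((x % (2 * h) + h) % (2 * h)) < 2 * h ↔ ¬2 * (x % (2 * h)) < 2 * h := by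
      rcases lt_or_ge (x % (2 * h)) h with hx | hx
      · rw [Int.emod_eq_of_lt (by omega) (by omega)]
        omega
      · rw [← Int.sub_emod_right, Int.emod_eq_of_lt (by omega) (by omega)]
        omega
    rw [hshift, hexchange]
    exact iff_of_false not_iff_self hndvd

lemma progressionResidue_zero (hb : 0 < b) (hbp : b < p) :
    progressionResidue p b 0 = (b - 1) / 2 := by
  rw [progressionResidue, zero_mul, add_zero, Int.emod_eq_of_lt (by omega) (by omega)]

lemma progressionResidue_sub (hp : 0 < p) (hb : Odd b) :
    progressionResidue p b (p - 1 - ρ) = p - 1 - progressionResidue p b ρ := by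
  obtain ⟨a, rfl⟩ := hb
  have hhalf : (2 * a + 1 - 1) / 2 = a := by omega
  have hnonneg := Int.emod_nonneg (a + ρ * (2 * a + 1)) hp.ne'
  have hlt := Int.emod_lt_of_pos (a + ρ * (2 * a + 1)) hp
  have hmod : a + (p - 1 - ρ) * (2 * a + 1) ≡ p - 1 - (a + ρ * (2 * a + 1)) % p [ZMOD p] := by
    refine Int.modEq_iff_dvd.mpr ⟨(a + ρ * (2 * a + 1)) / p - 2 * a, ?_⟩
    linear_combination -Int.emod_add_mul_ediv (a + ρ * (2 * a + 1)) p
  simp only [progressionResidue, hhalf]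
  exact hmod.eq.trans (Int.emod_eq_of_lt (by omega) (by omega))

lemma exists_le_two_mul_progressionResidue (hp : 0 < p) (hb : Odd b) (hpb : ¬p ∣ b) :
    ∃ ρ, 0 ≤ ρ ∧ ρ ≤ (p + 1) / 2 ∧ p ≤ 2 * progressionResidue p b ρ := by
  have hp1 : p ≠ 1 := fun h => hpb (h ▸ one_dvd b)
  by_contra! hsmall
  set m := (p + 1) / 2
  have hsmall₁ := hsmall m (by omega) le_rfl
  have hsmall₂ := hsmall (p - 1 - m) (by omega) (by omega)
  have hreflect := progressionResidue_sub (ρ := m) hp hb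
  have hmiddle : 2 * progressionResidue p b m = p - 1 := by omega
  obtain ⟨h, rfl⟩ : Odd p := ⟨progressionResidue p b m, by omega⟩
  have hequal : progressionResidue (2 * h + 1) b (2 * h + 1 - 1 - m) =
      progressionResidue (2 * h + 1) b m := by omega
  have hdvd : 2 * h + 1 ∣ 2 * b := by
    convert Int.ModEq.dvd hequal using 1
    rw [show m = h + 1 by omega]
    ring
  exact hpb ((Int.isCoprime_iff_gcd_eq_one.mpr (by simp)).dvd_of_dvd_mul_left hdvd)

end Residue

section Semigroup

variable {p q b n ρ : ℤ}

lemma mul_emod_mul_modEq (hqb : q * b ≡ 1 [ZMOD p]) : n * b % p * q ≡ n [ZMOD p] := by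
  calc n * b % p * q ≡ n * b * q [ZMOD p] := (Int.mod_modEq _ _).mul_right q
    _ = n * (q * b) := by ring
    _ ≡ n * 1 [ZMOD p] := hqb.mul_left n
    _ = n := mul_one n

lemma mem_Spq_iff (hp : 0 < p) (hq : 0 ≤ q) (hqb : q * b ≡ 1 [ZMOD p]) :
    n ∈ Spq p q ↔ n * b % p * q ≤ n := by
  constructor
  · rintro ⟨t, v, ht, hv, rfl⟩
    have hres : (t * p + v * q) * b ≡ v [ZMOD p] := by
      obtain ⟨c, hc⟩ := hqb.dvd
      exact Int.modEq_iff_dvd.mpr ⟨v * c - t * b, by linear_combination v * hc⟩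
    have hemod_le : v % p ≤ v := by
      linarith [Int.emod_add_mul_ediv v p, mul_nonneg hp.le (Int.ediv_nonneg hv hp.le)]
    calc (t * p + v * q) * b % p * q = v % p * q := by rw [hres.eq]
      _ ≤ v * q := mul_le_mul_of_nonneg_right (hemod_le) hq
      _ ≤ t * p + v * q := le_add_of_nonneg_left (mul_nonneg ht hp.le)
  · intro hle
    obtain ⟨c, hc⟩ := (mul_emod_mul_modEq (n := n) hqb).dvd
    have hc_nonneg : 0 ≤ c := nonneg_of_mul_nonneg_right (hc ▸ sub_nonneg.mpr hle) hp
    exact ⟨c, n * b % p, hc_nonneg, Int.emod_nonneg _ hp.ne', by linear_combination hc⟩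

lemma mem_Spq_iff_lt_add (hp : 0 < p) (hq : 0 ≤ q) (hqb : q * b ≡ 1 [ZMOD p]) :
    n ∈ Spq p q ↔ n * b % p * q < n + p := by
  rw [mem_Spq_iff hp hq hqb]
  refine ⟨fun hle => by omega, fun hlt => ?_⟩
  obtain ⟨c, hc⟩ := (mul_emod_mul_modEq (n := n) hqb).dvd
  have hc_nonneg : 0 ≤ c := by
    by_contra! hneg
    nlinarith
  linarith [mul_nonneg hp.le hc_nonneg]

lemma two_mul_halfConductor (hpq : IsCoprime p q) : 2 * halfConductor p q = (p - 1) * (q - 1) := by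
  refine Int.mul_ediv_cancel' ?_
  rcases Int.even_or_odd' p with ⟨h, rfl | rfl⟩
  · obtain ⟨x, y, hxy⟩ := hpq
    have hodd : Odd (y * q) := ⟨-(h * x), by linear_combination hxy⟩
    obtain ⟨g, rfl⟩ := (Int.odd_mul.mp hodd).2
    exact ⟨(2 * h - 1) * g, by ring⟩
  · exact ⟨h * (q - 1), by ring⟩

lemma isCoprime_of_mul_modEq_one_s5 (hqb : q * b ≡ 1 [ZMOD p]) : IsCoprime p q := by
  obtain ⟨c, hc⟩ := hqb.dvd
  exact ⟨c, b, by linear_combination -hc⟩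

lemma halfConductor_add_mem_Spq_iff (hp : 0 < p) (hq : 1 < q) (hqb : q * b ≡ 1 [ZMOD p])
    (hρ : 0 ≤ ρ) (hρp : ρ ≤ (p + 1) / 2) :
    halfConductor p q + ρ ∈ Spq p q ↔ 2 * ((halfConductor p q + ρ) * b % p) < p := by
  have hδ := two_mul_halfConductor (isCoprime_of_mul_modEq_one_s5 hqb)
  set u := (halfConductor p q + ρ) * b % p with hu
  constructor
  · rw [mem_Spq_iff hp (by omega) hqb, ← hu]
    intro hle
    by_contra! hlarge
    have hbound : (2 * u + 1 - p) * q ≤ 2 * ρ + 1 - p := by linarith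
    rcases hlarge.eq_or_lt with heq | hlt
    · rw [show 2 * u + 1 - p = 1 by omega] at hbound
      omega
    · have hfactor : 2 ≤ 2 * u + 1 - p := by omega
      have h2q : 2 * q ≤ 2 * ρ + 1 - p :=
        (mul_le_mul_of_nonneg_right hfactor (by omega)).trans hbound
      omega
  · rw [mem_Spq_iff_lt_add hp (by omega) hqb, ← hu]
    intro hsmall
    have hbound : (2 * u + 1 - p) * q ≤ 0 :=
      mul_nonpos_of_nonpos_of_nonneg (by omega) (by omega)
    linarith

lemma dvd_two_mul_halfConductor_mul_sub (hqb : q * b ≡ 1 [ZMOD p]) (hb : Odd b) :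
    p ∣ 2 * (halfConductor p q * b - (b - 1) / 2) := by
  have hδ := two_mul_halfConductor (isCoprime_of_mul_modEq_one_s5 hqb)
  obtain ⟨a, rfl⟩ := hb
  obtain ⟨c, hc⟩ := hqb.dvd
  rw [show (2 * a + 1 - 1) / 2 = a by omega]
  exact ⟨c + (q - 1) * (2 * a + 1), by linear_combination (2 * a + 1) * hδ + hc⟩

lemma halfConductor_add_mem_Spq_iff_iff_dvd (hp : 0 < p) (hq : 1 < q) (hqb : q * b ≡ 1 [ZMOD p])
    (hb : Odd b) (hρ : 0 ≤ ρ) (hρp : ρ ≤ (p + 1) / 2) :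
    (halfConductor p q + ρ ∈ Spq p q ↔ 2 * progressionResidue p b ρ < p) ↔
      p ∣ halfConductor p q * b - (b - 1) / 2 := by
  rw [halfConductor_add_mem_Spq_iff hp hq hqb hρ hρp, progressionResidue,
    ← two_mul_add_emod_lt_iff_iff_dvd hp (dvd_two_mul_halfConductor_mul_sub hqb hb)
      ((b - 1) / 2 + ρ * b),
    show (halfConductor p q + ρ) * b =
      (b - 1) / 2 + ρ * b + (halfConductor p q * b - (b - 1) / 2) by ring]

lemma halfConductor_add_mem_Spq_iff_mem_iff (hq : 1 < q) (hqb : q * b ≡ 1 [ZMOD p]) (hb : Odd b)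
    (hb0 : 0 < b) (hbp : b < p) (hρ : 0 ≤ ρ) (hρp : ρ ≤ (p + 1) / 2) :
    (halfConductor p q + ρ ∈ Spq p q ↔ halfConductor p q ∈ Spq p q) ↔
      2 * progressionResidue p b ρ < p := by
  have hp : 0 < p := hb0.trans hbp
  have hr₀ : 2 * progressionResidue p b 0 < p := by
    rw [progressionResidue_zero hb0 hbp]
    omega
  have hmemρ := halfConductor_add_mem_Spq_iff_iff_dvd hp hq hqb hb hρ hρp
  have hmem₀ := halfConductor_add_mem_Spq_iff_iff_dvd hp hq hqb hb le_rfl (by omega)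
  rw [add_zero] at hmem₀
  tauto

lemma KSet_eq_setOf_progressionResidue (hq : 1 < q) (hqb : q * b ≡ 1 [ZMOD p]) (hb : Odd b)
    (hb0 : 0 < b) (hbp : b < p) :
    KSet p q = {s | 0 ≤ s ∧ ∀ ρ, 0 ≤ ρ → ρ ≤ s → 2 * progressionResidue p b ρ < p} := by
  have hpb : ¬p ∣ b := fun hdvd => (Int.le_of_dvd hb0 hdvd).not_gt hbp
  obtain ⟨ρ₀, hρ₀, hρ₀p, hlarge⟩ := exists_le_two_mul_progressionResidue (hb0.trans hbp) hb hpb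
  exact (setOf_forall_le_congr
    (fun ρ hρ hρp => (halfConductor_add_mem_Spq_iff_mem_iff hq hqb hb hb0 hbp hρ hρp).symm)
    ⟨ρ₀, hρ₀, hρ₀p, hlarge.not_gt⟩).symm

end Semigroup

theorem stmt5 (p q k r rb : ℤ) (hp : 1 < p) (hq : 1 < q)
    (hpq : Int.gcd p q = 1)
    (hqkr : q = k * p + r) (hr0 : 0 < r) (hrp : r < p)
    (hrb0 : 0 < rb) (hrbp : rb < p) (hrrb : r * rb ≡ 1 [ZMOD p])
    (hodd : Odd rb) :
    ∀ σ : ℤ, IsGreatest {σ' : ℤ | 0 ≤ σ' ∧ ∀ ρ : ℤ, 0 ≤ ρ → ρ ≤ σ' →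
        ((rb - 1) / 2 + ρ * rb) % p ≤ (p + 1) / 2 - 1} σ ↔
      IsGreatest (KSet p q) σ := by
  have hqrb : q * rb ≡ 1 [ZMOD p] := by
    calc q * rb ≡ r * rb [ZMOD p] := Int.ModEq.mul_right rb (by simp [hqkr, Int.modEq_iff_dvd])
      _ ≡ 1 [ZMOD p] := hrrb
  have hsmall (ρ : ℤ) : ((rb - 1) / 2 + ρ * rb) % p ≤ (p + 1) / 2 - 1 ↔
      2 * progressionResidue p rb ρ < p := by
    rw [progressionResidue]
    omega
  intro σ
  simp only [hsmall, KSet_eq_setOf_progressionResidue hq hqrb hodd hrb0 hrbp]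
end

section
/- Let p, q > 1 be coprime integers with q ≡ 1 (mod p). Then K(p,q) = ⌈p/2⌉ − 1 = ⌊(p−1)/2⌋. -/
/-!
For `0 ≤ u < p` with `u * q ≡ n` modulo `p`, the number `u * q` is the smallest element of
`S(p, q)` in the residue class of `n`, so `n ∈ S(p, q)` iff `u * q ≤ n`. If `q ≡ 1` modulo `p`,
then `u` is just the residue of `n`. Moreover `p` divides `2 * δ = (p - 1) * (q - 1)`, so `δ` is
congruent to `0` or to `p / 2`. Let `0 ≤ ρ < p`. In the first case `δ + ρ ∈ S(p, q)` means
`ρ * (q - 1) ≤ δ`, that is, `2 * ρ ≤ p - 1`. In the second case `δ + ρ` has residue `p / 2 + ρ` or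
`ρ - p / 2`, the former being too large for membership and the latter small enough, so exactly the
complementary `ρ` work. Either way membership first changes at the least `ρ` with `p ≤ 2 * ρ`.
-/

theorem mem_Spq_iff_mul_le {p q u n : ℤ} (hpq : IsCoprime p q) (hq : 0 ≤ q) (hu : 0 ≤ u)
    (hup : u < p) (hn : u * q ≡ n [ZMOD p]) : n ∈ Spq p q ↔ u * q ≤ n := by
  constructor
  · rintro ⟨t, v, ht, hv, rfl⟩
    have hdvd : p ∣ u - v := by
      have hmod : u * q ≡ v * q [ZMOD p] := by simpa [Int.ModEq] using hn
      have : p ∣ (u - v) * q := sub_mul u v q ▸ hmod.symm.dvd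
      exact hpq.dvd_of_dvd_mul_right this
    have huv : u ≤ v := by
      by_contra! hlt
      have : p ≤ u - v := Int.le_of_dvd (sub_pos.2 hlt) hdvd
      linarith
    calc
      u * q ≤ v * q := mul_le_mul_of_nonneg_right huv hq
      _ ≤ t * p + v * q := le_add_of_nonneg_left (mul_nonneg ht (hu.trans hup.le))
  · intro hle
    obtain ⟨t, ht⟩ := hn.dvd
    have ht0 : 0 ≤ t := nonneg_of_mul_nonneg_right (ht ▸ sub_nonneg.2 hle) (hu.trans_lt hup)
    exact ⟨t, u, ht0, hu, by linarith⟩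

theorem isGreatest_KSet {p q s : ℤ} (hs : 0 ≤ s)
    (h : ∀ ρ : ℤ, 0 ≤ ρ → ρ ≤ s + 1 →
      (((p - 1) * (q - 1) / 2 + ρ ∈ Spq p q ↔ (p - 1) * (q - 1) / 2 ∈ Spq p q) ↔ ρ ≤ s)) :
    IsGreatest (KSet p q) s := by
  refine ⟨⟨hs, fun ρ h₀ h₁ ↦ (h ρ h₀ (by lia)).2 h₁⟩, fun x ⟨_, hx⟩ ↦ ?_⟩
  by_contra! hlt
  have : s + 1 ≤ s := (h (s + 1) (by lia) le_rfl).1 (hx (s + 1) (by lia) (by lia))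
  lia

theorem even_sub_one_mul_sub_one_of_gcd_eq_one {p q : ℤ} (hpq : Int.gcd p q = 1) :
    Even ((p - 1) * (q - 1)) := by
  rw [Int.even_mul, Int.even_sub_one, Int.even_sub_one, ← not_and_or]
  rintro ⟨hp, hq⟩
  have : (2 : ℤ) ∣ Int.gcd p q := Int.dvd_coe_gcd hp.two_dvd hq.two_dvd
  lia

theorem two_mul_emod_eq_of_dvd_two_mul {p n : ℤ} (hp : 0 < p) (h2 : p ∣ 2 * n) (hn : ¬ p ∣ n) :
    2 * (n % p) = p := by
  have hpos : 0 < n % p := (Int.emod_pos_of_not_dvd hn).resolve_left hp.ne'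
  have hdvd : p ∣ 2 * (n % p) - p :=
    dvd_sub_self_right.2 (((Int.mod_modEq n p).mul_left 2).dvd_iff.2 h2)
  have habs : |2 * (n % p) - p| < p := by
    rw [abs_lt]
    constructor <;> linarith [Int.emod_lt_of_pos n hp]
  exact sub_eq_zero.1 (Int.eq_zero_of_abs_lt_dvd hdvd habs)

section ModEqOne

variable {p q δ ρ : ℤ}

theorem mem_Spq_iff_mul_le_of_modEq_one {r n : ℤ} (hq : 0 ≤ q) (hmod : q ≡ 1 [ZMOD p])
    (hr : 0 ≤ r) (hrp : r < p) (hn : r ≡ n [ZMOD p]) : n ∈ Spq p q ↔ r * q ≤ n := by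
  have hpq : IsCoprime p q := by
    obtain ⟨k, hk⟩ := hmod.dvd
    exact ⟨k, 1, by linarith⟩
  have hrn : r * q ≡ n [ZMOD p] :=
    calc
      r * q ≡ r * 1 [ZMOD p] := hmod.mul_left r
      _ = r := mul_one r
      _ ≡ n [ZMOD p] := hn
  exact mem_Spq_iff_mul_le hpq hq hr hrp hrn

theorem add_mem_Spq_iff_of_dvd (hq : 1 < q) (hmod : q ≡ 1 [ZMOD p])
    (hδ : 2 * δ = (p - 1) * (q - 1)) (hdvd : p ∣ δ) (hρ : 0 ≤ ρ) (hρp : ρ < p) :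
    δ + ρ ∈ Spq p q ↔ 2 * ρ < p := by
  have hres : ρ ≡ δ + ρ [ZMOD p] := by simpa using hdvd
  calc
    δ + ρ ∈ Spq p q ↔ ρ * q ≤ δ + ρ :=
      mem_Spq_iff_mul_le_of_modEq_one (by linarith) hmod hρ hρp hres
    _ ↔ 2 * ρ * (q - 1) ≤ (p - 1) * (q - 1) := by
      rw [← hδ]
      constructor <;> intro h <;> linarith
    _ ↔ 2 * ρ ≤ p - 1 := mul_le_mul_iff_left₀ (sub_pos.2 hq)
    _ ↔ 2 * ρ < p := Int.le_sub_one_iff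

theorem add_mem_Spq_iff_of_not_dvd (hq : 0 < q) (hmod : q ≡ 1 [ZMOD p])
    (hδ : 2 * δ = (p - 1) * (q - 1)) (hdvd : ¬ p ∣ δ) (hρ : 0 ≤ ρ) (hρp : ρ < p) :
    δ + ρ ∈ Spq p q ↔ p ≤ 2 * ρ := by
  have hp : 0 < p := hρ.trans_lt hρp
  have h2δ : p ∣ 2 * δ := hδ ▸ hmod.symm.dvd.mul_left (p - 1)
  have hr : 2 * (δ % p) = p := two_mul_emod_eq_of_dvd_two_mul hp h2δ hdvd
  have hrq : 2 * (δ % p) * q = p * q := by rw [hr]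
  have hres : δ % p + ρ ≡ δ + ρ [ZMOD p] := (Int.mod_modEq δ p).add_right ρ
  rcases lt_or_ge (2 * ρ) p with hlt | hge
  · refine iff_of_false (fun hmem ↦ ?_) hlt.not_ge
    have hle : (δ % p + ρ) * q ≤ δ + ρ :=
      (mem_Spq_iff_mul_le_of_modEq_one hq.le hmod (by linarith) (by linarith) hres).1 hmem
    have hρq : 0 ≤ ρ * (q - 1) := mul_nonneg hρ (Int.sub_nonneg_of_le hq)
    linarith
  · refine iff_of_true ?_ hge
    have hres' : δ % p + ρ - p ≡ δ + ρ [ZMOD p] := by simpa using hres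
    rw [mem_Spq_iff_mul_le_of_modEq_one hq.le hmod (by linarith) (by linarith) hres']
    have hρq : ρ * (q - 1) ≤ (p - 1) * (q - 1) :=
      mul_le_mul_of_nonneg_right (Int.le_sub_one_of_lt hρp) (Int.sub_nonneg_of_le hq)
    linarith

theorem add_mem_Spq_iff_mem_Spq_iff (hq : 1 < q) (hmod : q ≡ 1 [ZMOD p])
    (hδ : 2 * δ = (p - 1) * (q - 1)) (hρ : 0 ≤ ρ) (hρp : ρ < p) :
    (δ + ρ ∈ Spq p q ↔ δ ∈ Spq p q) ↔ 2 * ρ < p := by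
  have hp : 0 < p := hρ.trans_lt hρp
  by_cases hdvd : p ∣ δ
  · have hmem : δ ∈ Spq p q := by
      simpa [hp] using add_mem_Spq_iff_of_dvd hq hmod hδ hdvd le_rfl hp
    rw [iff_true_right hmem, add_mem_Spq_iff_of_dvd hq hmod hδ hdvd hρ hρp]
  · have hq0 : 0 < q := by linarith
    have hmem : δ ∉ Spq p q := by
      simpa [hp.not_ge] using add_mem_Spq_iff_of_not_dvd hq0 hmod hδ hdvd le_rfl hp
    rw [iff_false_right hmem, add_mem_Spq_iff_of_not_dvd hq0 hmod hδ hdvd hρ hρp, not_le]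

end ModEqOne

theorem stmt8 (p q : ℤ) (hp : 1 < p) (hq : 1 < q)
    (hpq : Int.gcd p q = 1) (hmod : q ≡ 1 [ZMOD p]) :
    IsGreatest (KSet p q) ((p + 1) / 2 - 1) ∧ (p + 1) / 2 - 1 = (p - 1) / 2 := by
  have hs : (p + 1) / 2 - 1 = (p - 1) / 2 := by lia
  refine ⟨isGreatest_KSet (by lia) fun ρ hρ hρs ↦ ?_, hs⟩
  have hδ : 2 * ((p - 1) * (q - 1) / 2) = (p - 1) * (q - 1) :=
    Int.two_mul_ediv_two_of_even (even_sub_one_mul_sub_one_of_gcd_eq_one hpq)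
  rw [add_mem_Spq_iff_mem_Spq_iff hq hmod hδ hρ (by lia)]
  lia
end

section
/- Let p > 1 and let q, q′ > 1 be integers both coprime to p with q ≡ q′ (mod p). Then K(p,q) = K(p,q′); that is, K(p,q) depends only on the residue of q modulo p. -/
/-!
Let `r` be an inverse of `q` modulo `p`. With `u = n * r % p`, the least element of `S(p,q)`
congruent to `n` modulo `p` is `u * q`, so `n ∈ S(p,q)` iff `u * q ≤ n`. For `δ ≤ n < p * q / 2`
this says that `u` lies in the lower half of `[0, p)`. If `q' ≡ q [ZMOD p]`, then `r` is also an
inverse of `q'`, and `2 * δ = (p - 1) * (q - 1)` is unchanged modulo `p`. So passing from `q` to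
`q'` either fixes every residue `(δ + ρ) * r % p` or moves every one of them to the other half (by
`p / 2`), and the first `ρ` at which membership changes stays the same, as long as `δ + ρ` is in the
range where the criterion applies. That range is long enough: a run of equal membership starting at
`δ` has fewer than `q` terms, because `q` consecutive nonnegative integers contain a multiple of
`q`, and `q` consecutive elements of `S(p,q)` would force every later integer into it, among them
the Frobenius number `p * q - p - q = 2 * δ - 1`. By symmetry the run also has fewer than `p` terms.
-/

theorem two_mul_emod_lt_iff_not {p a b : ℤ} (hp : 0 < p) (h : 2 * a ≡ 2 * b [ZMOD p])
    (hab : ¬ a ≡ b [ZMOD p]) : 2 * (a % p) < p ↔ ¬ 2 * (b % p) < p := by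
  have ha := Int.emod_nonneg a hp.ne'
  have ha' := Int.emod_lt_of_pos a hp
  have hb := Int.emod_nonneg b hp.ne'
  have hb' := Int.emod_lt_of_pos b hp
  have hne : a % p ≠ b % p := hab
  obtain ⟨w, hw⟩ : p ∣ 2 * (b % p) - 2 * (a % p) :=
    (((Int.mod_modEq a p).mul_left 2).trans (h.trans ((Int.mod_modEq b p).symm.mul_left 2))).dvd
  have hw_lt : w < 2 := lt_of_mul_lt_mul_left (by linarith) hp.le
  have hw_gt : -2 < w := lt_of_mul_lt_mul_left (by linarith) hp.le
  interval_cases w <;> lia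

theorem two_mul_emod_add_lt_iff_iff {p a b : ℤ} (hp : 0 < p) (h : 2 * a ≡ 2 * b [ZMOD p])
    (x : ℤ) :
    (2 * ((a + x) % p) < p ↔ 2 * (a % p) < p) ↔ (2 * ((b + x) % p) < p ↔ 2 * (b % p) < p) := by
  by_cases hab : a ≡ b [ZMOD p]
  · rw [hab.eq, (hab.add_right x).eq]
  · have hx : 2 * (a + x) ≡ 2 * (b + x) [ZMOD p] := by
      simpa only [mul_add] using h.add_right (2 * x)
    rw [two_mul_emod_lt_iff_not hp h hab,
      two_mul_emod_lt_iff_not hp hx (mt (Int.ModEq.add_right_cancel' x) hab), not_iff_not]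

theorem exists_mul_modEq_one_of_isCoprime {p q : ℤ} (h : IsCoprime p q) :
    ∃ r, q * r ≡ 1 [ZMOD p] := by
  obtain ⟨a, b, hab⟩ := h
  exact ⟨b, Int.modEq_iff_dvd.mpr ⟨a, by linear_combination -hab⟩⟩

theorem mul_right_mem_Spq {k : ℤ} (p q : ℤ) (hk : 0 ≤ k) : k * q ∈ Spq p q :=
  ⟨0, k, le_rfl, hk, by ring⟩

theorem add_mul_right_mem_Spq {p q n k : ℤ} (hn : n ∈ Spq p q) (hk : 0 ≤ k) :
    n + k * q ∈ Spq p q := by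
  obtain ⟨t, u, ht, hu, rfl⟩ := hn
  exact ⟨t, u + k, ht, add_nonneg hu hk, by ring⟩

theorem emod_mul_modEq {p q r : ℤ} (hr : q * r ≡ 1 [ZMOD p]) (n : ℤ) :
    n * r % p * q ≡ n [ZMOD p] :=
  calc n * r % p * q ≡ n * r * q [ZMOD p] := (Int.mod_modEq _ p).mul_right q
    _ = n * (q * r) := by ring
    _ ≡ n * 1 [ZMOD p] := hr.mul_left n
    _ = n := mul_one n

theorem mem_Spq_of_emod_mul_lt_add {p q r n : ℤ} (hp : 0 < p) (hr : q * r ≡ 1 [ZMOD p])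
    (hn : n * r % p * q < n + p) : n ∈ Spq p q := by
  obtain ⟨c, hc⟩ := (emod_mul_modEq hr n).dvd
  have hc0 : -1 < c := lt_of_mul_lt_mul_left (by linarith) hp.le
  exact ⟨c, _, by lia, Int.emod_nonneg _ hp.ne', by linear_combination hc⟩

theorem mem_Spq_iff_emod_mul_le {p q r n : ℤ} (hp : 0 < p) (hq : 0 ≤ q)
    (hr : q * r ≡ 1 [ZMOD p]) : n ∈ Spq p q ↔ n * r % p * q ≤ n := by
  constructor
  · rintro ⟨t, u, ht, hu, rfl⟩
    obtain ⟨c, hc⟩ := hr.dvd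
    have hres : (t * p + u * q) * r ≡ u [ZMOD p] :=
      Int.modEq_iff_dvd.mpr ⟨u * c - t * r, by linear_combination u * hc⟩
    have hle : u % p ≤ u := by
      rw [Int.emod_def]
      exact sub_le_self u (mul_nonneg hp.le (Int.ediv_nonneg hu hp.le))
    calc (t * p + u * q) * r % p * q = u % p * q := by rw [hres.eq]
      _ ≤ u * q := mul_le_mul_of_nonneg_right hle hq
      _ ≤ t * p + u * q := le_add_of_nonneg_left (mul_nonneg ht hp.le)
  · exact fun hle => mem_Spq_of_emod_mul_lt_add hp hr (by linarith)

theorem mem_Spq_iff_two_mul_emod_lt {p q r n : ℤ} (hp : 0 < p) (hq : 0 < q)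
    (hr : q * r ≡ 1 [ZMOD p]) (hn : (p - 1) * (q - 1) ≤ 2 * n) (hn' : 2 * n < p * q) :
    n ∈ Spq p q ↔ 2 * (n * r % p) < p := by
  constructor
  · intro hmem
    have hle := (mem_Spq_iff_emod_mul_le hp hq.le hr).mp hmem
    exact lt_of_mul_lt_mul_right (by linarith) hq.le
  · intro hlt
    have hle : 2 * (n * r % p) * q ≤ (p - 1) * q :=
      mul_le_mul_of_nonneg_right (Int.le_sub_one_of_lt hlt) hq.le
    exact mem_Spq_of_emod_mul_lt_add hp hr (by linarith)

theorem frobenius_notMem_Spq {p q : ℤ} (hp : 0 < p) (hq : 0 ≤ q) (hpq : IsCoprime p q) :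
    p * q - p - q ∉ Spq p q := by
  obtain ⟨r, hr⟩ := exists_mul_modEq_one_of_isCoprime hpq
  obtain ⟨c, hc⟩ := hr.dvd
  have hres : (p * q - p - q) * r ≡ p - 1 [ZMOD p] :=
    Int.modEq_iff_dvd.mpr ⟨1 - q * r + r - c, by linear_combination -hc⟩
  rw [mem_Spq_iff_emod_mul_le hp hq hr, hres.eq, Int.emod_eq_of_lt (by lia) (by lia)]
  linarith

theorem exists_add_mem_Spq {q d : ℤ} (p : ℤ) (hq : 0 < q) (hd : 0 ≤ d) :
    ∃ ρ, 0 ≤ ρ ∧ ρ < q ∧ d + ρ ∈ Spq p q := by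
  refine ⟨-d % q, Int.emod_nonneg _ hq.ne', Int.emod_lt_of_pos _ hq, ?_⟩
  have hmul : d + -d % q = -(-d / q) * q := by linear_combination Int.emod_add_mul_ediv (-d) q
  rw [hmul]
  exact mul_right_mem_Spq p q (neg_nonneg.mpr (Int.ediv_nonpos_of_nonpos_of_neg (by lia) hq))

theorem exists_add_notMem_Spq {p q d : ℤ} (hp : 0 < p) (hq : 0 < q) (hpq : IsCoprime p q)
    (hd : d ≤ p * q - p - q) : ∃ ρ, 0 ≤ ρ ∧ ρ < q ∧ d + ρ ∉ Spq p q := by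
  set m := p * q - p - q - d
  refine ⟨m % q, Int.emod_nonneg _ hq.ne', Int.emod_lt_of_pos _ hq, fun hmem => ?_⟩
  have hk : 0 ≤ m / q := Int.ediv_nonneg (sub_nonneg.mpr hd) hq.le
  have hfrob : d + m % q + m / q * q = p * q - p - q := by
    linear_combination Int.emod_add_mul_ediv m q
  exact frobenius_notMem_Spq hp hq.le hpq (hfrob ▸ add_mul_right_mem_Spq hmem hk)

theorem delta_pos {p q : ℤ} (hp : 1 < p) (hq : 1 < q) (hpq : IsCoprime p q) : 0 < delta p q := by
  have hmul : 0 < (p - 1) * (q - 1) := mul_pos (sub_pos.mpr hp) (sub_pos.mpr hq)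
  linarith [two_mul_delta hpq]

theorem mem_KSet_iff {p q s : ℤ} :
    s ∈ KSet p q ↔ 0 ≤ s ∧ ∀ ρ, 0 ≤ ρ → ρ ≤ s → (delta p q + ρ ∈ Spq p q ↔ delta p q ∈ Spq p q) :=
  Iff.rfl

theorem mem_KSet_of_le {p q s t : ℤ} (hs : s ∈ KSet p q) (ht : 0 ≤ t) (hts : t ≤ s) :
    t ∈ KSet p q :=
  ⟨ht, fun ρ hρ hρt => hs.2 ρ hρ (hρt.trans hts)⟩

theorem add_one_lt_right_of_mem_KSet {p q s : ℤ} (hp : 1 < p) (hq : 1 < q) (hpq : IsCoprime p q)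
    (hs : s ∈ KSet p q) : s + 1 < q := by
  by_contra! hqs
  have hδ := delta_pos hp hq hpq
  have hrun := (mem_KSet_iff.mp hs).2
  by_cases hmem : delta p q ∈ Spq p q
  · obtain ⟨ρ, hρ, hρq, hnot⟩ := exists_add_notMem_Spq (d := delta p q) (by lia) (by lia) hpq
      (by linarith [two_mul_delta hpq])
    exact hnot ((hrun ρ hρ (by lia)).mpr hmem)
  · obtain ⟨ρ, hρ, hρq, hin⟩ := exists_add_mem_Spq p (zero_lt_one.trans hq) hδ.le
    exact hmem ((hrun ρ hρ (by lia)).mp hin)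

theorem add_one_lt_left_of_mem_KSet {p q s : ℤ} (hp : 1 < p) (hq : 1 < q) (hpq : IsCoprime p q)
    (hs : s ∈ KSet p q) : s + 1 < p :=
  add_one_lt_right_of_mem_KSet hq hp hpq.symm (KSet_comm p q ▸ hs)

theorem delta_add_mem_Spq_iff {p q r ρ : ℤ} (hp : 0 < p) (hq : 0 < q) (hpq : IsCoprime p q)
    (hr : q * r ≡ 1 [ZMOD p]) (hρ : 0 ≤ ρ) (hρ' : 2 * ρ < p + q - 1) :
    delta p q + ρ ∈ Spq p q ↔ 2 * ((delta p q * r + ρ * r) % p) < p := by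
  have hδ := two_mul_delta hpq
  rw [mem_Spq_iff_two_mul_emod_lt hp hq hr (by linarith) (by linarith), add_mul]

theorem two_mul_delta_modEq {p q q' : ℤ} (hpq : IsCoprime p q) (hpq' : IsCoprime p q')
    (hmod : q ≡ q' [ZMOD p]) : 2 * delta p q ≡ 2 * delta p q' [ZMOD p] := by
  rw [two_mul_delta hpq, two_mul_delta hpq']
  exact (hmod.sub_right 1).mul_left (p - 1)

theorem mem_KSet_iff_of_modEq {p q q' s : ℤ} (hp : 0 < p) (hq : 0 < q) (hq' : 0 < q')
    (hpq : IsCoprime p q) (hpq' : IsCoprime p q') (hmod : q ≡ q' [ZMOD p])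
    (hs : 2 * s < p + q - 1) (hs' : 2 * s < p + q' - 1) : s ∈ KSet p q ↔ s ∈ KSet p q' := by
  obtain ⟨r, hr⟩ := exists_mul_modEq_one_of_isCoprime hpq
  have hr' : q' * r ≡ 1 [ZMOD p] := (hmod.symm.mul_right r).trans hr
  have hδ : 2 * (delta p q * r) ≡ 2 * (delta p q' * r) [ZMOD p] := by
    simpa only [mul_assoc] using (two_mul_delta_modEq hpq hpq' hmod).mul_right r
  rw [mem_KSet_iff, mem_KSet_iff]
  refine and_congr_right fun hs0 => forall₃_congr fun ρ hρ hρs => ?_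
  have hmem (σ : ℤ) (hσ : 0 ≤ σ) (hσs : σ ≤ s) :=
    delta_add_mem_Spq_iff hp hq hpq hr hσ (by lia)
  have hmem' (σ : ℤ) (hσ : 0 ≤ σ) (hσs : σ ≤ s) :=
    delta_add_mem_Spq_iff hp hq' hpq' hr' hσ (by lia)
  have hmem0 := hmem 0 le_rfl hs0
  have hmem0' := hmem' 0 le_rfl hs0
  rw [add_zero, zero_mul, add_zero] at hmem0 hmem0'
  rw [hmem ρ hρ hρs, hmem' ρ hρ hρs, hmem0, hmem0']
  exact two_mul_emod_add_lt_iff_iff hp hδ (ρ * r)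

theorem KSet_subset_of_modEq {p q q' : ℤ} (hp : 1 < p) (hq : 1 < q) (hq' : 1 < q')
    (hpq : IsCoprime p q) (hpq' : IsCoprime p q') (hmod : q ≡ q' [ZMOD p]) :
    KSet p q ⊆ KSet p q' := by
  intro s hs
  have transfer {t : ℤ} (ht : 0 ≤ t) (hts : t ≤ s) (ht' : 2 * t < p + q' - 1) : t ∈ KSet p q' := by
    have hmem := mem_KSet_of_le hs ht hts
    have htp := add_one_lt_left_of_mem_KSet hp hq hpq hmem
    have htq := add_one_lt_right_of_mem_KSet hp hq hpq hmem
    exact (mem_KSet_iff_of_modEq (by lia) (by lia) (by lia) hpq hpq' hmod (by lia) ht').mp hmem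
  have hsp := add_one_lt_left_of_mem_KSet hp hq hpq hs
  suffices hs' : 2 * s < p + q' - 1 from transfer hs.1 le_rfl hs'
  -- Otherwise `q' ≤ s`, and the first `q'` terms of the run transfer to `q'`, which is too many.
  by_contra! hlong
  have hmem' : q' - 1 ∈ KSet p q' := transfer (by lia) (by lia) (by lia)
  have := add_one_lt_right_of_mem_KSet hp hq' hpq' hmem'
  lia

theorem KSet_eq_of_modEq {p q q' : ℤ} (hp : 1 < p) (hq : 1 < q) (hq' : 1 < q')
    (hpq : IsCoprime p q) (hpq' : IsCoprime p q') (hmod : q ≡ q' [ZMOD p]) :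
    KSet p q = KSet p q' :=
  (KSet_subset_of_modEq hp hq hq' hpq hpq' hmod).antisymm
    (KSet_subset_of_modEq hp hq' hq hpq' hpq hmod.symm)

theorem stmt9 (p q q' : ℤ) (hp : 1 < p) (hq : 1 < q) (hq' : 1 < q')
    (hpq : Int.gcd p q = 1) (hpq' : Int.gcd p q' = 1)
    (hmod : q ≡ q' [ZMOD p]) :
    ∀ s : ℤ, IsGreatest (KSet p q) s ↔ IsGreatest (KSet p q') s := by
  intro s
  rw [← Int.isCoprime_iff_gcd_eq_one] at hpq hpq'
  rw [KSet_eq_of_modEq hp hq hq' hpq hpq' hmod]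
end

section
/- Let p, q > 1 be coprime integers with p odd and r̄ odd. Let ρ be an integer with 0 ≤ ρ ≤ (p−1)/2 and r_ρ ≤ ⌈p/2⌉ − 1. Then δ + ρ ∈ S(p,q); indeed there exists an integer t ≥ 0 with δ + ρ = t·p + r_ρ·q. -/
/-!
Let `c = (rb - 1) / 2 + ρ * rb`, where `rb` is an odd inverse of `q` modulo the odd number `p`.
Then `2 * c = (2 * ρ + 1) * rb - 1`, so modulo `p` both `2 * (δ + ρ)` and `2 * (c * q)` are
`2 * ρ + 1 - q`, and `δ + ρ ≡ c * q`. If the residue `s` of `c` is at most `(p - 1) / 2`, then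
`s * q` is at most `(p - 1) / 2 * q = δ + (p - 1) / 2`, which is less than `δ + ρ + p`. So
`δ + ρ - s * q` is a multiple of `p` greater than `-p`, that is, a nonnegative multiple of `p`.
-/

section

variable {p q rb ρ : ℤ}

lemma modEq_of_mul_left_modEq {a b c : ℤ} (hpc : IsCoprime p c) (h : c * a ≡ c * b [ZMOD p]) :
    a ≡ b [ZMOD p] := by
  rw [Int.modEq_iff_dvd, ← mul_sub] at h
  rw [Int.modEq_iff_dvd]
  exact hpc.dvd_of_dvd_mul_left h

lemma exists_nonneg_eq_mul_add_of_modEq {a b : ℤ} (hp : 0 < p) (h : a ≡ b [ZMOD p])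
    (hlt : b < a + p) : ∃ t : ℤ, 0 ≤ t ∧ a = t * p + b := by
  obtain ⟨t, ht⟩ := h.symm.dvd
  have hpt : 0 < p * (t + 1) := by linarith
  exact ⟨t, Int.lt_add_one_iff.mp (pos_of_mul_pos_right hpt hp.le), by linarith⟩

lemma two_mul_half_pred_mul_pred (hpodd : Odd p) :
    2 * ((p - 1) * (q - 1) / 2) = (p - 1) * (q - 1) :=
  Int.two_mul_ediv_two_of_even ((hpodd.sub_odd odd_one).mul_right _)

lemma two_mul_half_pred_add_mul (hodd : Odd rb) :
    2 * ((rb - 1) / 2 + ρ * rb) = (2 * ρ + 1) * rb - 1 := by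
  linear_combination Int.two_mul_ediv_two_of_even (hodd.sub_odd odd_one)

lemma half_pred_mul_pred_add_modEq (hpodd : Odd p) (hodd : Odd rb)
    (hqrb : q * rb ≡ 1 [ZMOD p]) :
    (p - 1) * (q - 1) / 2 + ρ ≡ ((rb - 1) / 2 + ρ * rb) * q [ZMOD p] := by
  refine modEq_of_mul_left_modEq (Int.isCoprime_two_right.mpr hpodd) ?_
  calc 2 * ((p - 1) * (q - 1) / 2 + ρ)
      = p * (q - 1) + ((2 * ρ + 1) * 1 - q) := by
        linear_combination two_mul_half_pred_mul_pred (q := q) hpodd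
    _ ≡ (2 * ρ + 1) * 1 - q [ZMOD p] := by simp [Int.ModEq]
    _ ≡ (2 * ρ + 1) * (q * rb) - q [ZMOD p] := (hqrb.symm.mul_left _).sub_right q
    _ = 2 * (((rb - 1) / 2 + ρ * rb) * q) := by
        linear_combination -q * two_mul_half_pred_add_mul (ρ := ρ) hodd

lemma mul_lt_half_pred_mul_pred_add {s : ℤ} (hq : 0 ≤ q) (hpodd : Odd p) (hρ : -p < 2 * ρ)
    (hs : 2 * s ≤ p - 1) : s * q < (p - 1) * (q - 1) / 2 + ρ + p := by
  have hsq : 2 * s * q ≤ (p - 1) * q := mul_le_mul_of_nonneg_right hs hq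
  have hδ := two_mul_half_pred_mul_pred (q := q) hpodd
  linarith

theorem stmt10_general (hp : 0 < p) (hq : 0 ≤ q) (hpodd : Odd p)
    (hqrb : q * rb ≡ 1 [ZMOD p]) (hodd : Odd rb) (hρ : -p < 2 * ρ)
    (hrρ : ((rb - 1) / 2 + ρ * rb) % p ≤ (p + 1) / 2 - 1) :
    (p - 1) * (q - 1) / 2 + ρ ∈ Spq p q ∧
    ∃ t : ℤ, 0 ≤ t ∧
      (p - 1) * (q - 1) / 2 + ρ = t * p + (((rb - 1) / 2 + ρ * rb) % p) * q := by
  have hmod : (p - 1) * (q - 1) / 2 + ρ ≡ (((rb - 1) / 2 + ρ * rb) % p) * q [ZMOD p] :=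
    (half_pred_mul_pred_add_modEq hpodd hodd hqrb).trans ((Int.mod_modEq _ p).symm.mul_right q)
  have hs : 2 * (((rb - 1) / 2 + ρ * rb) % p) ≤ p - 1 := by
    obtain ⟨m, rfl⟩ := hpodd
    omega
  have hlt := mul_lt_half_pred_mul_pred_add hq hpodd hρ hs
  obtain ⟨t, ht, h⟩ := exists_nonneg_eq_mul_add_of_modEq hp hmod hlt
  exact ⟨⟨t, _, ht, Int.emod_nonneg _ hp.ne', h⟩, t, ht, h⟩

end

theorem stmt10 (p q k r rb ρ : ℤ) (hp : 1 < p) (hq : 1 < q)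
    (hpq : Int.gcd p q = 1) (hpodd : Odd p)
    (hqkr : q = k * p + r) (hr0 : 0 < r) (hrp : r < p)
    (hrb0 : 0 < rb) (hrbp : rb < p) (hrrb : r * rb ≡ 1 [ZMOD p])
    (hodd : Odd rb)
    (hρ0 : 0 ≤ ρ) (hρ1 : ρ ≤ (p - 1) / 2)
    (hrρ : ((rb - 1) / 2 + ρ * rb) % p ≤ (p + 1) / 2 - 1) :
    (p - 1) * (q - 1) / 2 + ρ ∈ Spq p q ∧
    ∃ t : ℤ, 0 ≤ t ∧
      (p - 1) * (q - 1) / 2 + ρ = t * p + (((rb - 1) / 2 + ρ * rb) % p) * q := by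
  have hqr : q ≡ r [ZMOD p] := by simp [hqkr, Int.ModEq]
  exact stmt10_general (by omega) (by omega) hpodd ((hqr.mul_right rb).trans hrrb) hodd
    (by omega) hrρ
end

section
/- Let p, q > 1 be coprime integers with p odd and r̄ even. Let ρ be an integer with 0 ≤ ρ ≤ (p−3)/2 and r′_ρ ≥ (p+1)/2. Then δ + ρ ∉ S(p,q). -/
theorem mul_emod_mul_le_of_mem_Spq {p q s n : ℤ} (hp : 0 ≤ p) (hq : 0 ≤ q)
    (hs : q * s ≡ 1 [ZMOD p]) (hn : n ∈ Spq p q) : n * s % p * q ≤ n := by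
  obtain ⟨t, u, ht, hu, rfl⟩ := hn
  have hu_modEq : (t * p + u * q) * s ≡ u [ZMOD p] := calc
    (t * p + u * q) * s = u * (q * s) + p * (t * s) := by ring
    _ ≡ u * (q * s) [ZMOD p] := Int.modEq_add_fac_self
    _ ≡ u * 1 [ZMOD p] := hs.mul_left u
    _ = u := mul_one u
  have hu_emod_le : u % p ≤ u :=
    (Int.emod_def u p).trans_le (sub_le_self u (mul_nonneg hp (Int.ediv_nonneg hu hp)))
  calc
    (t * p + u * q) * s % p * q = u % p * q := by rw [hu_modEq]
    _ ≤ u * q := mul_le_mul_of_nonneg_right hu_emod_le hq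
    _ ≤ t * p + u * q := le_add_of_nonneg_left (mul_nonneg ht hp)

theorem sub_one_mul_sub_one_ediv_two_mul_modEq {p q s : ℤ} (hp : Odd p)
    (hs : Even s) (hqs : q * s ≡ 1 [ZMOD p]) :
    (p - 1) * (q - 1) / 2 * s ≡ (p + s - 1) / 2 [ZMOD p] := by
  rw [Int.mul_ediv_assoc' _ (hp.sub_odd odd_one).two_dvd]
  obtain ⟨m, rfl⟩ := hp
  obtain ⟨c, rfl⟩ := hs
  have hm : (2 * m + 1 - 1) / 2 = m := by lia
  have hmc : (2 * m + 1 + (c + c) - 1) / 2 = m + c := by lia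
  rw [hm, hmc]
  calc
    m * (q - 1) * (c + c) = m * (q * (c + c)) - m * (c + c) := by ring
    _ ≡ m * 1 - m * (c + c) [ZMOD 2 * m + 1] := (hqs.mul_left m).sub_right _
    _ = m + c + (2 * m + 1) * -c := by ring
    _ ≡ m + c [ZMOD 2 * m + 1] := Int.modEq_add_fac_self

theorem stmt12_general {p q s ρ : ℤ} (hp : 0 ≤ p) (hq : 0 ≤ q) (hpodd : Odd p)
    (hs : Even s) (hqs : q * s ≡ 1 [ZMOD p]) (hρ : ρ < q + (p - 1) / 2)
    (hrem : (p + 1) / 2 ≤ ((p + s - 1) / 2 + ρ * s) % p) :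
    (p - 1) * (q - 1) / 2 + ρ ∉ Spq p q := by
  intro hmem
  have hmod : ((p - 1) * (q - 1) / 2 + ρ) * s ≡ (p + s - 1) / 2 + ρ * s [ZMOD p] := by
    rw [add_mul]
    exact (sub_one_mul_sub_one_ediv_two_mul_modEq hpodd hs hqs).add_right _
  have hhalf : (p + 1) / 2 = (p - 1) / 2 + 1 := by lia
  have hle : (p + 1) / 2 * q ≤ (p - 1) * (q - 1) / 2 + ρ := calc
    (p + 1) / 2 * q ≤ ((p + s - 1) / 2 + ρ * s) % p * q := mul_le_mul_of_nonneg_right hrem hq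
    _ = ((p - 1) * (q - 1) / 2 + ρ) * s % p * q := by rw [hmod]
    _ ≤ (p - 1) * (q - 1) / 2 + ρ := mul_emod_mul_le_of_mem_Spq hp hq hqs hmem
  rw [Int.mul_ediv_assoc' _ (hpodd.sub_odd odd_one).two_dvd, hhalf] at hle
  linarith

theorem stmt12 (p q k r rb ρ : ℤ) (hp : 1 < p) (hq : 1 < q)
    (hpq : Int.gcd p q = 1) (hpodd : Odd p)
    (hqkr : q = k * p + r) (hr0 : 0 < r) (hrp : r < p)
    (hrb0 : 0 < rb) (hrbp : rb < p) (hrrb : r * rb ≡ 1 [ZMOD p])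
    (heven : Even rb)
    (hρ0 : 0 ≤ ρ) (hρ1 : ρ ≤ (p - 3) / 2)
    (hrρ : (p + 1) / 2 ≤ ((p + rb - 1) / 2 + ρ * rb) % p) :
    (p - 1) * (q - 1) / 2 + ρ ∉ Spq p q := by
  have hqr : q ≡ r [ZMOD p] := by simp [hqkr, Int.ModEq]
  exact stmt12_general (by lia) (by lia) hpodd heven ((hqr.mul_right rb).trans hrrb) (by lia) hrρ
end
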